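/- arXiv:1407.7638 — 5 statements merged into one kernel-verified Lean document; each statement's English description precedes it below -/
import Mathlib

section
/- Fix an integer n ≥ 1. Let σ : ℂ[u, v, t] → ℂ[u, v, t][t^{-1}] be the ℂ-algebra homomorphism determined by σ(u) = t^{n+1} v^n + t^{n+2} u, σ(v) = t v, σ(t) = t^{-1} (the transition map between the two charts of the bundle Q over ℙ¹). Then the set of polynomials F ∈ ℂ[u, v, t] such that σ(F) lies in the image of ℂ[u, v, t] in the localization ℂ[u, v, t][t^{-1}] is exactly the ℂ-subalgebra of ℂ[u, v, t] generated by the n + 5 elements v, vt, u, ut, ut², …, u t^{n+1}, and u t^{n+2} − v^n t^{n+1}. (These elements generate the ring of regular functions 𝒪(Q).) -/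
/-!
Order the monomials lexicographically with `u > v > t`. The generators have leading monomials `v`,
`vt` and `u t^i` for `0 ≤ i ≤ n + 2`, so the leading monomials of products of generators are exactly
the `u^a v^b t^c` with `c ≤ a (n + 2) + b`.

Conversely, `σ(u^a v^b t^c)` is `u^a v^b t^(a (n + 2) + b - c)` plus terms of smaller degree in `u`,
and it is homogeneous for a two-dimensional torus action. For this reason the image of the leading
monomial of `F` cannot be cancelled in `σ(F)`, and if `σ(F)` has no pole along `t = 0`, then this
leading monomial satisfies `c ≤ a (n + 2) + b`. A multiple of a product of generators
therefore cancels it, and the subduction terminates because the monomial order is a well-order.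
-/

open MvPolynomial

noncomputable section

/-- The polynomial ring `ℂ[u, v, t]`, with `u = X 0`, `v = X 1`, `t = X 2`. -/
abbrev R3 : Type := MvPolynomial (Fin 3) ℂ

/-- The localization `ℂ[u, v, t][t⁻¹]` of `ℂ[u, v, t]` at `t`. -/
abbrev R3t : Type := Localization.Away (X 2 : R3)

/-- For fixed `n ≥ 1`, the ℂ-algebra homomorphism
`σ : ℂ[u, v, t] → ℂ[u, v, t][t⁻¹]` determined by `σ(u) = t^{n+1} v^n + t^{n+2} u`,
`σ(v) = t v`, `σ(t) = t⁻¹` (the transition map between the two charts of the bundle `Q`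
over `ℙ¹`). -/
def sigmaQ (n : ℕ) : R3 →ₐ[ℂ] R3t :=
  aeval ![algebraMap R3 R3t ((X 2) ^ (n + 1) * (X 1) ^ n + (X 2) ^ (n + 2) * X 0),
    algebraMap R3 R3t (X 2 * X 1),
    IsLocalization.Away.invSelf (S := R3t) (X 2 : R3)]

open scoped MonomialOrder

section LeadingMonomial

variable {ι R : Type*} {m : MonomialOrder ι}

section CommSemiring

variable [CommSemiring R]

/-- The polynomial `f` is `x^d` plus terms that are smaller for the monomial order `m`. Unlike
`m.Monic f ∧ m.degree f = d`, this also makes sense over the zero ring. -/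
def HasLeadingMonomial (m : MonomialOrder ι) (f : MvPolynomial ι R) (d : ι →₀ ℕ) : Prop :=
  m.degree f ≼[m] d ∧ coeff d f = 1

lemma hasLeadingMonomial_monomial (d : ι →₀ ℕ) :
    HasLeadingMonomial m (monomial d (1 : R)) d :=
  ⟨m.degree_monomial_le 1, by classical rw [coeff_monomial, if_pos rfl]⟩

lemma hasLeadingMonomial_one : HasLeadingMonomial m (1 : MvPolynomial ι R) 0 :=
  hasLeadingMonomial_monomial 0

namespace HasLeadingMonomial

variable {f g : MvPolynomial ι R} {d e : ι →₀ ℕ}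

lemma mul (hf : HasLeadingMonomial m f d) (hg : HasLeadingMonomial m g e) :
    HasLeadingMonomial m (f * g) (d + e) := by
  refine ⟨m.degree_mul_le.trans ?_, ?_⟩
  · simpa only [map_add] using add_le_add hf.1 hg.1
  · rw [m.coeff_mul_of_add_of_degree_le hf.1 hg.1, hf.2, hg.2, one_mul]

lemma pow (hf : HasLeadingMonomial m f d) (k : ℕ) :
    HasLeadingMonomial m (f ^ k) (k • d) := by
  induction k with
  | zero => simpa only [pow_zero, zero_nsmul] using hasLeadingMonomial_one
  | succ k ih => simpa only [pow_succ, succ_nsmul] using ih.mul hf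

lemma add_monomial (hf : HasLeadingMonomial m f d) (hed : e ≺[m] d) (r : R) :
    HasLeadingMonomial m (f + monomial e r) d := by
  classical
  refine ⟨m.degree_add_le.trans (max_le hf.1 ((m.degree_monomial_le r).trans hed.le)), ?_⟩
  have hne : e ≠ d := fun h => hed.ne (congrArg m.toSyn h)
  rw [coeff_add, coeff_monomial, if_neg hne, add_zero, hf.2]

end HasLeadingMonomial

/-- The exponents `d` such that `S` contains a polynomial with leading monomial `x^d`. -/
def leadingExponents (m : MonomialOrder ι) (S : Subalgebra R (MvPolynomial ι R)) :
    AddSubmonoid (ι →₀ ℕ) where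
  carrier := {d | ∃ f ∈ S, HasLeadingMonomial m f d}
  zero_mem' := ⟨1, one_mem S, hasLeadingMonomial_one⟩
  add_mem' := fun ⟨f, hfS, hf⟩ ⟨g, hgS, hg⟩ => ⟨f * g, mul_mem hfS hgS, hf.mul hg⟩

end CommSemiring

theorem le_of_forall_exists_hasLeadingMonomial [CommRing R] {S T : Submodule R (MvPolynomial ι R)}
    (hST : S ≤ T) (hT : ∀ f ∈ T, ∃ g ∈ S, HasLeadingMonomial m g (m.degree f)) : T ≤ S := by
  intro f
  induction f using (InvImage.wf (fun f => m.toSyn (m.degree f)) wellFounded_lt).induction with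
  | _ f ih =>
  intro hfT
  obtain ⟨g, hgS, hgdeg, hgcoeff⟩ := hT f hfT
  set h := f - m.leadingCoeff f • g with hh
  have hmul : m.leadingCoeff f • g ∈ S := S.smul_mem _ hgS
  have hle : m.degree h ≼[m] m.degree f :=
    m.degree_sub_le.trans (max_le le_rfl (m.degree_smul_le.trans hgdeg))
  have hcoeff : coeff (m.degree f) h = 0 := by
    rw [hh, coeff_sub, coeff_smul, hgcoeff, smul_eq_mul, mul_one]
    exact sub_self _
  have hhS : h ∈ S := by
    rcases hle.lt_or_eq with hlt | heq
    · exact ih h hlt (sub_mem hfT (hST hmul))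
    · rw [← m.toSyn.injective heq, m.coeff_degree_eq_zero_iff] at hcoeff
      exact hcoeff ▸ zero_mem S
  simpa only [hh, sub_add_cancel] using add_mem hhS hmul

end LeadingMonomial

section Exponents

/-- The exponent vector of the monomial `u^a v^b t^c`. -/
def exponent (a b c : ℕ) : Fin 3 →₀ ℕ := Finsupp.equivFunOnFinite.symm ![a, b, c]

lemma monomial_exponent {R : Type*} [CommSemiring R] (a b c : ℕ) :
    monomial (exponent a b c) (1 : R) = X 0 ^ a * X 1 ^ b * X 2 ^ c := by
  rw [monomial_eq, Finsupp.prod_fintype _ _ (by simp), Fin.prod_univ_three]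
  simp [exponent]

lemma exponent_apply_eq_self (d : Fin 3 →₀ ℕ) : exponent (d 0) (d 1) (d 2) = d := by
  ext i
  fin_cases i <;> rfl

lemma lex_lt_of_apply_zero_lt {k : ℕ} {d e : Fin (k + 1) →₀ ℕ} (h : d 0 < e 0) :
    d ≺[MonomialOrder.lex] e :=
  MonomialOrder.lex_lt_iff.2 (Finsupp.Lex.lt_iff.2 ⟨0, fun j hj => absurd hj j.not_lt_zero, h⟩)

lemma apply_zero_le_of_lex_le {k : ℕ} {d e : Fin (k + 1) →₀ ℕ} (h : d ≼[MonomialOrder.lex] e) :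
    d 0 ≤ e 0 :=
  not_lt.1 fun hlt => (lex_lt_of_apply_zero_lt hlt).not_ge h

lemma exponent_mem_of_le {M : AddSubmonoid (Fin 3 →₀ ℕ)} {k : ℕ} (hv : exponent 0 1 0 ∈ M)
    (hvt : exponent 0 1 1 ∈ M) (hu : ∀ i ≤ k, exponent 1 0 i ∈ M) (a b c : ℕ)
    (hc : c ≤ a * k + b) : exponent a b c ∈ M := by
  induction a generalizing c with
  | zero =>
    have hcb : c ≤ b := by simpa only [zero_mul, zero_add] using hc
    have heq : exponent 0 b c = (b - c) • exponent 0 1 0 + c • exponent 0 1 1 := by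
      ext i
      fin_cases i <;> simp [exponent, hcb]
    exact heq ▸ add_mem (nsmul_mem hv _) (nsmul_mem hvt _)
  | succ a ih =>
    have hsplit : exponent (a + 1) b c =
        exponent a b (c - min c k) + exponent 1 0 (min c k) := by
      ext i
      fin_cases i <;> simp [exponent]
    have hrest : c - min c k ≤ a * k + b := by
      rw [Nat.succ_mul] at hc
      omega
    exact hsplit ▸ add_mem (ih _ hrest) (hu _ (min_le_right c k))

end Exponents

section Transition

/-- The polynomial ring `R[u, v, t]` of functions on a chart of `Q`. -/
abbrev ChartRing (R : Type*) [CommRing R] : Type _ := MvPolynomial (Fin 3) R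

/-- The ring `R[u, v, t][t⁻¹]` of functions on the overlap of the two charts of `Q`. -/
abbrev OverlapRing (R : Type*) [CommRing R] : Type _ := Localization.Away (X 2 : ChartRing R)

variable (R : Type*) [CommRing R] (n : ℕ)

/-- The transition map `σ` between the two charts of `Q`, over an arbitrary coefficient ring. -/
def transitionMap : ChartRing R →ₐ[R] OverlapRing R :=
  aeval ![algebraMap (ChartRing R) (OverlapRing R)
      (X 2 ^ (n + 1) * X 1 ^ n + X 2 ^ (n + 2) * X 0),
    algebraMap (ChartRing R) (OverlapRing R) (X 2 * X 1),
    IsLocalization.Away.invSelf (X 2 : ChartRing R)]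

/-- The functions on one chart of `Q` that extend to the other chart, which is the ring of regular
functions on `Q`. -/
def regularFunctions : Subalgebra R (ChartRing R) :=
  (IsScalarTower.toAlgHom R (ChartRing R) (OverlapRing R)).range.comap (transitionMap R n)

/-- The generators `v`, `vt`, `u t^(n+2) - v^n t^(n+1)` and `u t^i` for `i ≤ n + 1` of the ring of
regular functions on `Q`. -/
def regularGenerators : Set (ChartRing R) :=
  {X 1, X 2 * X 1, X 0 * X 2 ^ (n + 2) - X 1 ^ n * X 2 ^ (n + 1)} ∪
    {w | ∃ i ≤ n + 1, w = X 0 * X 2 ^ i}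

variable {R n}

lemma mem_regularFunctions {F : ChartRing R} : F ∈ regularFunctions R n ↔
    ∃ G, algebraMap (ChartRing R) (OverlapRing R) G = transitionMap R n F :=
  Iff.rfl

lemma transitionMap_X_zero : transitionMap R n (X 0) = algebraMap (ChartRing R) (OverlapRing R)
    (X 2 ^ (n + 1) * X 1 ^ n + X 2 ^ (n + 2) * X 0) := by
  simp [transitionMap]

lemma transitionMap_X_one : transitionMap R n (X 1) =
    algebraMap (ChartRing R) (OverlapRing R) (X 2 * X 1) := by
  simp [transitionMap]

lemma algebraMap_X_two_mul_transitionMap_X_two :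
    algebraMap (ChartRing R) (OverlapRing R) (X 2) * transitionMap R n (X 2) = 1 := by
  simp [transitionMap]

lemma algebraMap_X_two_pow_mul_transitionMap_X_two_pow (k : ℕ) :
    algebraMap (ChartRing R) (OverlapRing R) (X 2) ^ k * transitionMap R n (X 2) ^ k = 1 := by
  rw [← mul_pow, algebraMap_X_two_mul_transitionMap_X_two, one_pow]

lemma X_two_mul_X_one_mem_regularFunctions : X 2 * X 1 ∈ regularFunctions R n := by
  refine mem_regularFunctions.2 ⟨X 1, ?_⟩
  rw [map_mul, transitionMap_X_one, map_mul]
  linear_combination (-algebraMap (ChartRing R) (OverlapRing R) (X 1)) *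
    algebraMap_X_two_mul_transitionMap_X_two (R := R) (n := n)

lemma X_zero_mul_X_two_pow_mem_regularFunctions {i : ℕ} (hi : i ≤ n + 1) :
    X 0 * X 2 ^ i ∈ regularFunctions R n := by
  obtain ⟨k, hk⟩ := Nat.exists_eq_add_of_le' hi
  refine mem_regularFunctions.2 ⟨X 2 ^ k * X 1 ^ n + X 2 ^ (k + 1) * X 0, ?_⟩
  rw [map_mul, map_pow, transitionMap_X_zero, show n + 2 = k + i + 1 by omega, hk]
  simp only [map_mul, map_pow, map_add]
  have hinv := algebraMap_X_two_pow_mul_transitionMap_X_two_pow (R := R) (n := n) i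
  generalize algebraMap (ChartRing R) (OverlapRing R) = φ at *
  linear_combination (-(φ (X 2) ^ k * φ (X 1) ^ n + φ (X 2) ^ (k + 1) * φ (X 0))) * hinv

lemma X_zero_mul_sub_mem_regularFunctions :
    X 0 * X 2 ^ (n + 2) - X 1 ^ n * X 2 ^ (n + 1) ∈ regularFunctions R n := by
  refine mem_regularFunctions.2 ⟨X 0, ?_⟩
  simp only [map_mul, map_sub, map_pow, map_add, transitionMap_X_zero, transitionMap_X_one]
  have hinv := algebraMap_X_two_mul_transitionMap_X_two (R := R) (n := n)
  have hinv_pow := algebraMap_X_two_pow_mul_transitionMap_X_two_pow (R := R) (n := n) (n + 2)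
  generalize transitionMap R n (X 2) = y at *
  generalize algebraMap (ChartRing R) (OverlapRing R) = φ at *
  linear_combination (-φ (X 0)) * hinv_pow - φ (X 2) ^ n * y ^ (n + 1) * φ (X 1) ^ n * hinv

lemma adjoin_regularGenerators_le :
    Algebra.adjoin R (regularGenerators R n) ≤ regularFunctions R n := by
  rw [Algebra.adjoin_le_iff]
  rintro w ((rfl | rfl | rfl) | ⟨i, hi, rfl⟩)
  · exact mem_regularFunctions.2 ⟨_, transitionMap_X_one.symm⟩
  · exact X_two_mul_X_one_mem_regularFunctions
  · exact X_zero_mul_sub_mem_regularFunctions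
  · exact X_zero_mul_X_two_pow_mem_regularFunctions hi

end Transition

section LeadingExponents

variable {R : Type*} {n : ℕ}

lemma hasLeadingMonomial_exponent [CommSemiring R] (a b c : ℕ) :
    HasLeadingMonomial MonomialOrder.lex
      (X 0 ^ a * X 1 ^ b * X 2 ^ c : MvPolynomial (Fin 3) R) (exponent a b c) :=
  monomial_exponent (R := R) a b c ▸ hasLeadingMonomial_monomial _

lemma hasLeadingMonomial_X_zero_mul_add [CommSemiring R] (r : R) :
    HasLeadingMonomial MonomialOrder.lex
      (X 0 * X 2 ^ (n + 2) + C r * (X 1 ^ n * X 2 ^ (n + 1)) : MvPolynomial (Fin 3) R)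
      (exponent 1 0 (n + 2)) := by
  have hlt : exponent 0 n (n + 1) ≺[MonomialOrder.lex] exponent 1 0 (n + 2) :=
    lex_lt_of_apply_zero_lt zero_lt_one
  have h := (hasLeadingMonomial_exponent (R := R) 1 0 (n + 2)).add_monomial hlt r
  rw [← mul_one r, ← C_mul_monomial, monomial_exponent] at h
  simpa only [pow_zero, pow_one, one_mul, mul_one] using h

lemma exponent_mem_leadingExponents [CommRing R] {a b c : ℕ} (hc : c ≤ a * (n + 2) + b) :
    exponent a b c ∈
      leadingExponents MonomialOrder.lex (Algebra.adjoin R (regularGenerators R n)) := by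
  refine exponent_mem_of_le (M := leadingExponents _ _) ⟨X 1, ?_, ?_⟩ ⟨X 2 * X 1, ?_, ?_⟩
    (fun i hi => ?_) a b c hc
  · exact Algebra.subset_adjoin (by simp [regularGenerators])
  · simpa using hasLeadingMonomial_exponent (R := R) 0 1 0
  · exact Algebra.subset_adjoin (by simp [regularGenerators])
  · simpa [mul_comm] using hasLeadingMonomial_exponent (R := R) 0 1 1
  · rcases hi.lt_or_eq with hlt | rfl
    · refine ⟨X 0 * X 2 ^ i, Algebra.subset_adjoin (Or.inr ⟨i, Nat.le_of_lt_succ hlt, rfl⟩), ?_⟩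
      simpa using hasLeadingMonomial_exponent (R := R) 1 0 i
    · refine ⟨_, Algebra.subset_adjoin (Or.inl (Or.inr (Or.inr rfl))), ?_⟩
      simpa [sub_eq_add_neg] using hasLeadingMonomial_X_zero_mul_add (-1 : R)

end LeadingExponents

section ExponentBound

variable {R : Type*} [CommRing R] {n N : ℕ} {d e : Fin 3 →₀ ℕ}

/-- The polynomial `t^N σ(u^a v^b t^c)`, where `d = (a, b, c)` and `c ≤ N`. -/
def clearedImage (R : Type*) [CommRing R] (n N : ℕ) (d : Fin 3 →₀ ℕ) : ChartRing R :=
  X 2 ^ (N - d 2) * (X 2 ^ (n + 1) * X 1 ^ n + X 2 ^ (n + 2) * X 0) ^ d 0 * (X 2 * X 1) ^ d 1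

/-- The exponent of the leading monomial of `clearedImage R n N d`. -/
def imageExponent (n N : ℕ) (d : Fin 3 →₀ ℕ) : Fin 3 →₀ ℕ :=
  exponent (d 0) (d 1) (N - d 2 + d 0 * (n + 2) + d 1)

lemma imageExponent_apply_two :
    imageExponent n N d 2 = N - d 2 + d 0 * (n + 2) + d 1 :=
  rfl

/-- The weights of `u`, `v` and `t` for an action of a two-dimensional torus that makes both terms
`t^(n+1) v^n` and `t^(n+2) u` of `σ(u)` have weight `(n, n + 1)`. -/
def torusWeight (n : ℕ) : Fin 3 → ℤ × ℤ := ![(n, -1), (1, 0), (0, 1)]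

lemma weight_imageExponent : Finsupp.weight (torusWeight n) (imageExponent n N d) =
    ((n * d 0 + d 1 : ℤ), ((N - d 2 : ℕ) + d 0 * (n + 1) + d 1 : ℤ)) := by
  rw [Finsupp.weight_apply, Finsupp.sum_fintype _ _ (by simp), Fin.sum_univ_three]
  simp only [imageExponent, exponent, Fin.isValue, Finsupp.equivFunOnFinite_symm_apply_apply,
    Matrix.cons_val_zero, torusWeight, Int.reduceNeg, Prod.smul_mk, Int.nsmul_eq_mul, mul_neg,
    mul_one, Matrix.cons_val_one, nsmul_zero, Prod.mk_add_mk, add_zero, Matrix.cons_val,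
    Nat.cast_add, Nat.cast_mul, Nat.cast_ofNat, Prod.mk.injEq, add_left_inj]
  constructor <;> ring

lemma algebraMap_X_two_pow_mul_transitionMap_monomial (hd : d 2 ≤ N) (r : R) :
    algebraMap (ChartRing R) (OverlapRing R) (X 2 ^ N) * transitionMap R n (monomial d r) =
      algebraMap (ChartRing R) (OverlapRing R) (C r * clearedImage R n N d) := by
  have hpole : algebraMap (ChartRing R) (OverlapRing R) (X 2 ^ N) * transitionMap R n (X 2) ^ d 2 =
      algebraMap (ChartRing R) (OverlapRing R) (X 2 ^ (N - d 2)) := by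
    rw [← Nat.sub_add_cancel hd, pow_add, map_mul, Nat.add_sub_cancel, map_pow _ _ (d 2),
      mul_assoc, map_pow, algebraMap_X_two_pow_mul_transitionMap_X_two_pow, mul_one]
  have hC : transitionMap R n (C r) = algebraMap (ChartRing R) (OverlapRing R) (C r) :=
    (transitionMap R n).commutes r
  rw [monomial_eq, Finsupp.prod_fintype _ _ fun i => pow_zero _, Fin.prod_univ_three]
  simp only [clearedImage, map_mul, map_pow _ _ (d 0), map_pow _ _ (d 1), map_pow _ _ (d 2),
    hC, ← hpole, transitionMap_X_zero, transitionMap_X_one]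
  ring

lemma X_two_pow_mul_eq_sum_clearedImage {F G : ChartRing R} (hN : ∀ d ∈ F.support, d 2 ≤ N)
    (hG : algebraMap (ChartRing R) (OverlapRing R) G = transitionMap R n F) :
    X 2 ^ N * G = ∑ d ∈ F.support, C (coeff d F) * clearedImage R n N d := by
  have hinj : Function.Injective (algebraMap (ChartRing R) (OverlapRing R)) :=
    IsLocalization.injective _ <|
      Submonoid.powers_le.2 (isRegular_iff_mem_nonZeroDivisors.1 (isRegular_X (n := (2 : Fin 3))))
  apply hinj
  calc algebraMap (ChartRing R) (OverlapRing R) (X 2 ^ N * G)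
      = algebraMap (ChartRing R) (OverlapRing R) (X 2 ^ N) *
          transitionMap R n (∑ d ∈ F.support, monomial d (coeff d F)) := by
        rw [map_mul, hG, ← F.as_sum]
    _ = _ := by
        rw [map_sum, map_sum, Finset.mul_sum]
        exact Finset.sum_congr rfl fun d hd =>
          algebraMap_X_two_pow_mul_transitionMap_monomial (hN d hd) _

lemma hasLeadingMonomial_clearedImage :
    HasLeadingMonomial MonomialOrder.lex (clearedImage R n N d) (imageExponent n N d) := by
  have ht := hasLeadingMonomial_exponent (R := R) 0 0 1
  have hvt := hasLeadingMonomial_exponent (R := R) 0 1 1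
  have hu := hasLeadingMonomial_X_zero_mul_add (n := n) (1 : R)
  convert ((ht.pow (N - d 2)).mul (hu.pow (d 0))).mul (hvt.pow (d 1)) using 1
  · rw [clearedImage, C_1]
    ring
  · ext i
    fin_cases i <;> simp [imageExponent, exponent]

lemma isWeightedHomogeneous_clearedImage :
    IsWeightedHomogeneous (torusWeight n) (clearedImage R n N d)
      (Finsupp.weight (torusWeight n) (imageExponent n N d)) := by
  have hX := isWeightedHomogeneous_X R (torusWeight n)
  have hu : IsWeightedHomogeneous (torusWeight n)
      (X 2 ^ (n + 1) * X 1 ^ n + X 2 ^ (n + 2) * X 0 : ChartRing R) (n, n + 1) := by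
    refine .add ?_ ?_
    · convert ((hX 2).pow (n + 1)).mul ((hX 1).pow n) using 1
      simp [torusWeight]
    · convert ((hX 2).pow (n + 2)).mul (hX 0) using 1
      simp only [torusWeight, Int.reduceNeg, Fin.isValue, Matrix.cons_val, Prod.smul_mk, nsmul_zero,
        Int.nsmul_eq_mul, Nat.cast_add, Nat.cast_ofNat, mul_one, Matrix.cons_val_zero,
        Prod.mk_add_mk, zero_add, Prod.mk.injEq, true_and]
      ring
  convert (((hX 2).pow (N - d 2)).mul (hu.pow (d 0))).mul (((hX 2).mul (hX 1)).pow (d 1)) using 1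
  · rfl
  · rw [weight_imageExponent]
    ext <;> simp [torusWeight, mul_comm]

lemma eq_of_coeff_clearedImage_ne_zero (hd : d 2 ≤ N) (he : e 2 ≤ N)
    (hed : e ≼[MonomialOrder.lex] d)
    (hcoeff : coeff (imageExponent n N d) (clearedImage R n N e) ≠ 0) : e = d := by
  have hweight := isWeightedHomogeneous_clearedImage hcoeff
  have hle : imageExponent n N d ≼[MonomialOrder.lex] imageExponent n N e :=
    (MonomialOrder.lex.le_degree (mem_support_iff.2 hcoeff)).trans
      hasLeadingMonomial_clearedImage.1
  have h0 : e 0 = d 0 := le_antisymm (apply_zero_le_of_lex_le hed)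
    (apply_zero_le_of_lex_le (d := imageExponent n N d) (e := imageExponent n N e) hle)
  rw [weight_imageExponent, weight_imageExponent, h0, Prod.mk.injEq] at hweight
  have h1 : e 1 = d 1 := by omega
  have h2 : e 2 = d 2 := by omega
  rw [← exponent_apply_eq_self e, h0, h1, h2, exponent_apply_eq_self]

lemma coeff_sum_clearedImage_ne_zero {F : ChartRing R} (hN : ∀ d ∈ F.support, d 2 ≤ N)
    (hF : F ≠ 0) :
    coeff (imageExponent n N (MonomialOrder.lex.degree F))
      (∑ d ∈ F.support, C (coeff d F) * clearedImage R n N d) ≠ 0 := by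
  have hmem := MonomialOrder.lex.degree_mem_support hF
  rw [coeff_sum, Finset.sum_eq_single_of_mem _ hmem]
  · rw [coeff_C_mul, hasLeadingMonomial_clearedImage.2, mul_one]
    exact mem_support_iff.1 hmem
  · intro e he hne
    rw [coeff_C_mul]
    by_contra h
    exact hne (eq_of_coeff_clearedImage_ne_zero (hN _ hmem) (hN e he)
      (MonomialOrder.lex.le_degree he) (right_ne_zero_of_mul h))

theorem lex_degree_two_le_of_mem_regularFunctions {F : ChartRing R}
    (hF : F ∈ regularFunctions R n) :
    MonomialOrder.lex.degree F 2 ≤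
      MonomialOrder.lex.degree F 0 * (n + 2) + MonomialOrder.lex.degree F 1 := by
  rcases eq_or_ne F 0 with rfl | hF0
  · simp
  obtain ⟨G, hG⟩ := mem_regularFunctions.1 hF
  have hN : ∀ d ∈ F.support, d 2 ≤ degreeOf 2 F := fun d hd => monomial_le_degreeOf 2 hd
  have hcoeff := coeff_sum_clearedImage_ne_zero (n := n) hN hF0
  rw [← X_two_pow_mul_eq_sum_clearedImage hN hG, X_pow_eq_monomial, coeff_monomial_mul'] at hcoeff
  have hle := (ite_ne_right_iff.1 hcoeff).1 2
  have hd := hN _ (MonomialOrder.lex.degree_mem_support hF0)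
  rw [Finsupp.single_eq_same, imageExponent_apply_two] at hle
  omega

end ExponentBound

theorem stmt13_general (R : Type*) [CommRing R] (n : ℕ) :
    regularFunctions R n = Algebra.adjoin R (regularGenerators R n) := by
  have hlead : ∀ F ∈ regularFunctions R n, MonomialOrder.lex.degree F ∈
      leadingExponents MonomialOrder.lex (Algebra.adjoin R (regularGenerators R n)) := by
    intro F hF
    have h := exponent_mem_leadingExponents (R := R) (lex_degree_two_le_of_mem_regularFunctions hF)
    rwa [exponent_apply_eq_self] at h
  have hle : Subalgebra.toSubmodule (regularFunctions R n) ≤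
      Subalgebra.toSubmodule (Algebra.adjoin R (regularGenerators R n)) :=
    le_of_forall_exists_hasLeadingMonomial adjoin_regularGenerators_le hlead
  exact le_antisymm hle adjoin_regularGenerators_le

/-- For `n ≥ 1`, the set of polynomials `F ∈ ℂ[u, v, t]` such that `σ(F)`
lies in the image of `ℂ[u, v, t]` in `ℂ[u, v, t][t⁻¹]` is exactly the ℂ-subalgebra of
`ℂ[u, v, t]` generated by the `n + 5` elements `v`, `vt`, `u`, `ut`, `ut²`, …, `ut^{n+1}`,
and `ut^{n+2} − v^n t^{n+1}`. -/
theorem stmt13 (n : ℕ) (hn : 1 ≤ n) :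
    {F : R3 | ∃ G : R3, algebraMap R3 R3t G = sigmaQ n F} =
      ↑(Algebra.adjoin ℂ
        (({X 1, X 2 * X 1, X 0 * (X 2) ^ (n + 2) - (X 1) ^ n * (X 2) ^ (n + 1)} :
            Set R3) ∪
          {w : R3 | ∃ i ≤ n + 1, w = X 0 * (X 2) ^ i})) :=
  congrArg SetLike.coe (stmt13_general ℂ n)

end
end

section
/- Let p, q be coprime positive integers and let B(p,q) ⊆ A be the ℂ-linear span of the images of the monomials x^i y^j u^k v^ℓ with p(i − ℓ) + q(j − k) ≥ 0. Then for every ν ∈ ℕ the set m_ν(B(p,q)) := D^ν(B(p,q) ∩ ker D^{ν+1}) equals the ℂ-linear span of the monomials x^α y^β with pα + qβ ≥ (p+q)ν. (This is part (2) of the main theorem: the affine extension P̂(p,q) of SL₂ satisfies m_ν(P̂(p,q)) = ⊕_{pα+qβ ≥ (p+q)ν} ℂ x^α y^β.) -/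
/-!
Give `x, y, u, v` the bidegrees `(1, 0), (0, 1), (0, -1), (-1, 0)`. The relation `xv - yu = 1` is
homogeneous, and modulo lower degree in `u, v` it reads `xv = yu`, so a monomial of bidegree
`(a, b)` and degree `N` in `u, v` depends, modulo monomials of the same bidegree and lower degree,
only on `(α, β) = (a + N, b + N)`. As `D ^ N` sends it to `N! x^α y^β` and kills lower degrees, the
linear independence of the `x^α y^β` shows that `ker D ^ N` meets the span of the monomials with
bidegree in any given set `W` exactly in the span of those of degree less than `N`. Applying `D ^ ν`
to the part killed by `D ^ (ν + 1)` thus leaves the `x^α y^β` with `(α - ν, β - ν) ∈ W` and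
`α + β ≥ ν`. For `W = {(a, b) | pa + qb ≥ 0}` the first condition implies the second.
-/

open MvPolynomial

noncomputable section

/-- The ideal `⟨XV − YU − 1⟩` of `ℂ[X, Y, U, V]` (with `X = X 0`, `Y = X 1`, `U = X 2`,
`V = X 3`). -/
def sl2Ideal : Ideal (MvPolynomial (Fin 4) ℂ) :=
  Ideal.span {X 0 * X 3 - X 1 * X 2 - 1}

/-- The coordinate ring `A = ℂ[X,Y,U,V]/⟨XV − YU − 1⟩` of `SL₂` over `ℂ`. -/
abbrev SL2R : Type := MvPolynomial (Fin 4) ℂ ⧸ sl2Ideal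

/-- `x`, the image of `X` in `A`. -/
def sx : SL2R := Ideal.Quotient.mk sl2Ideal (X 0)
/-- `y`, the image of `Y` in `A`. -/
def sy : SL2R := Ideal.Quotient.mk sl2Ideal (X 1)
/-- `u`, the image of `U` in `A`. -/
def su : SL2R := Ideal.Quotient.mk sl2Ideal (X 2)
/-- `v`, the image of `V` in `A`. -/
def sv : SL2R := Ideal.Quotient.mk sl2Ideal (X 3)

/-- The ℂ-linear span `B(p,q) ⊆ A` of the monomials `x^i y^j u^k v^ℓ` with
`p(i − ℓ) + q(j − k) ≥ 0`; it is the coordinate ring of the affine extension `P̂(p,q)`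
of `SL₂`. -/
def Bpq (p q : ℕ) : Submodule ℂ SL2R :=
  Submodule.span ℂ {a : SL2R | ∃ i j k l : ℕ,
    0 ≤ (p : ℤ) * ((i : ℤ) - (l : ℤ)) + (q : ℤ) * ((j : ℤ) - (k : ℤ)) ∧
    a = sx ^ i * sy ^ j * su ^ k * sv ^ l}

lemma mem_of_mem_span_of_map_eq_zero {R M M' : Type*} [Ring R] [AddCommGroup M] [Module R M]
    [AddCommGroup M'] [Module R M'] {f : M →ₗ[R] M'} {S : Set M} {T : Set M'} {G : Submodule R M}
    (hT : LinearIndepOn R id T) (hST : Set.MapsTo f S T)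
    (hG : ∀ a ∈ S, ∀ b ∈ S, f a = f b → a - b ∈ G) {c : M} (hc : c ∈ Submodule.span R S)
    (hfc : f c = 0) : c ∈ G := by
  obtain ⟨l, rfl⟩ := (Finsupp.mem_span_iff_linearCombination R S c).1 hc
  -- Modulo `G` an element of `S` depends only on its image in `T`, so a relation between the
  -- images is a relation modulo `G`.
  let φ : S → T := hST.restrict
  have hfactors : Function.FactorsThrough (fun a : S ↦ G.mkQ a) φ := fun a b hab ↦
    (Submodule.Quotient.eq G).2 (hG a a.2 b b.2 (congrArg Subtype.val hab))
  have hl : l.mapDomain φ = 0 := by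
    refine linearIndependent_iff.1 hT _ ?_
    rw [Finsupp.linearCombination_mapDomain, ← hfc, Finsupp.apply_linearCombination]
    rfl
  rw [← G.ker_mkQ, LinearMap.mem_ker, Finsupp.apply_linearCombination]
  change Finsupp.linearCombination R (fun a : S ↦ G.mkQ a) l = 0
  rw [← hfactors.extend_comp fun _ ↦ 0, ← Finsupp.linearCombination_mapDomain, hl, map_zero]

lemma linearIndependent_pow_mul_pow {R A : Type*} [CommRing R] [CommRing A] [Algebra R A]
    {x y : A} (hxy : AlgebraicIndependent R ![x, y]) :
    LinearIndependent R fun m : ℕ × ℕ ↦ x ^ m.1 * y ^ m.2 := by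
  have hmonomials := ((basisMonomials (Fin 2) R).linearIndependent.map'
    (aeval ![x, y]).toLinearMap (LinearMap.ker_eq_bot.2 hxy)).comp
    (fun m : ℕ × ℕ ↦ Finsupp.equivFunOnFinite.symm ![m.1, m.2]) (fun m n h ↦ by
      have := Finsupp.equivFunOnFinite.symm.injective h
      simpa [Prod.ext_iff] using this)
  simpa [Function.comp_def, aeval_monomial, Finsupp.prod_fintype] using hmonomials

section Monomials

variable {R A : Type*} [CommRing R] [CommRing A] [Algebra R A]

/-- The monomials `x^i y^j u^k v^l` of degree `k + l = n` in `u, v` whose bidegree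
`(i - l, j - k)` lies in `W`; that is, `x, y, u, v` have bidegrees
`(1, 0), (0, 1), (0, -1), (-1, 0)`. -/
def monomialsOfBidegree (x y u v : A) (W : Set (ℤ × ℤ)) (n : ℕ) : Set A :=
  {a | ∃ i j k l : ℕ, k + l = n ∧ ((i : ℤ) - l, (j : ℤ) - k) ∈ W ∧
    a = x ^ i * y ^ j * u ^ k * v ^ l}

variable (R) in
/-- The filtration by degree in `u, v` of the span of the monomials of bidegree in `W`. The
`N`-th step is spanned by the degrees less than `N`, so that `D ^ N` vanishes on it. -/
def bidegreeFiltration (x y u v : A) (W : Set (ℤ × ℤ)) (N : ℕ) : Submodule R A :=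
  Submodule.span R (⋃ n < N, monomialsOfBidegree x y u v W n)

variable {x y u v : A} {W : Set (ℤ × ℤ)} {N : ℕ}

lemma monomial_mem_bidegreeFiltration {i j k l : ℕ} (hW : ((i : ℤ) - l, (j : ℤ) - k) ∈ W)
    (hN : k + l < N) :
    x ^ i * y ^ j * u ^ k * v ^ l ∈ bidegreeFiltration R x y u v W N :=
  Submodule.subset_span (Set.mem_biUnion hN ⟨i, j, k, l, rfl, hW, rfl⟩)

lemma bidegreeFiltration_succ (N : ℕ) :
    bidegreeFiltration R x y u v W (N + 1) =
      bidegreeFiltration R x y u v W N ⊔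
        Submodule.span R (monomialsOfBidegree x y u v W N) := by
  rw [bidegreeFiltration, Set.biUnion_lt_succ, Submodule.span_union, bidegreeFiltration]

lemma bidegreeFiltration_mono : Monotone (bidegreeFiltration R x y u v W) :=
  monotone_nat_of_le_succ fun N ↦ by
    rw [bidegreeFiltration_succ]
    exact le_sup_left

lemma iSup_bidegreeFiltration :
    ⨆ N, bidegreeFiltration R x y u v W N =
      Submodule.span R {a | ∃ i j k l : ℕ, ((i : ℤ) - l, (j : ℤ) - k) ∈ W ∧
        a = x ^ i * y ^ j * u ^ k * v ^ l} := by
  refine le_antisymm (iSup_le fun N ↦ Submodule.span_mono ?_) (Submodule.span_le.2 ?_)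
  · refine Set.iUnion₂_subset ?_
    rintro n - a ⟨i, j, k, l, -, ha⟩
    exact ⟨i, j, k, l, ha⟩
  · rintro _ ⟨i, j, k, l, hW, rfl⟩
    exact Submodule.mem_iSup_of_mem (k + l + 1)
      (monomial_mem_bidegreeFiltration hW (Nat.lt_succ_self _))

lemma monomial_add_sub_monomial_add_mem_bidegreeFiltration (hdet : x * v - y * u = 1) {i j k l : ℕ}
    (hW : ((i : ℤ) - l, (j : ℤ) - k) ∈ W) (n : ℕ) :
    x ^ (i + n) * y ^ j * u ^ k * v ^ (l + n) - x ^ i * y ^ (j + n) * u ^ (k + n) * v ^ l ∈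
      bidegreeFiltration R x y u v W (k + l + n) := by
  have hgeom : x ^ (i + n) * y ^ j * u ^ k * v ^ (l + n) -
        x ^ i * y ^ (j + n) * u ^ (k + n) * v ^ l =
      ∑ m ∈ Finset.range n, x ^ (i + m) * y ^ (j + (n - 1 - m)) * u ^ (k + (n - 1 - m)) *
        v ^ (l + m) := by
    calc _ = x ^ i * y ^ j * u ^ k * v ^ l * ((x * v) ^ n - (y * u) ^ n) := by ring
      _ = x ^ i * y ^ j * u ^ k * v ^ l *
          ∑ m ∈ Finset.range n, (x * v) ^ m * (y * u) ^ (n - 1 - m) := by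
        rw [← (Commute.all (x * v) (y * u)).geom_sum₂_mul, hdet, mul_one]
      _ = _ := by
        rw [Finset.mul_sum]
        exact Finset.sum_congr rfl fun m _ ↦ by ring
  rw [hgeom]
  refine Submodule.sum_mem _ fun m hm ↦ monomial_mem_bidegreeFiltration ?_ ?_
  · push_cast
    simpa only [add_sub_add_right_eq_sub] using hW
  · have := Finset.mem_range.1 hm
    omega

lemma monomial_sub_monomial_mem_bidegreeFiltration (hdet : x * v - y * u = 1)
    {i j k l i' j' k' l' : ℕ} (hW : ((i : ℤ) - l, (j : ℤ) - k) ∈ W)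
    (hik : i + k = i' + k') (hjl : j + l = j' + l') (hkl : k + l = k' + l') :
    x ^ i * y ^ j * u ^ k * v ^ l - x ^ i' * y ^ j' * u ^ k' * v ^ l' ∈
      bidegreeFiltration R x y u v W (k + l) := by
  wlog hk : k ≤ k' generalizing i j k l i' j' k' l'
  · have hW' : ((i' : ℤ) - l', (j' : ℤ) - k') ∈ W := by
      convert hW using 2 <;> omega
    rw [hkl, ← neg_mem_iff, neg_sub]
    exact this hW' hik.symm hjl.symm hkl.symm (le_of_not_ge hk)
  obtain ⟨n, rfl⟩ := Nat.exists_eq_add_of_le hk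
  obtain rfl : i = i' + n := by omega
  obtain rfl : l = l' + n := by omega
  obtain rfl : j' = j + n := by omega
  rw [← add_assoc]
  refine monomial_add_sub_monomial_add_mem_bidegreeFiltration hdet ?_ n
  simpa using hW

end Monomials

section Derivation

variable {R A : Type*} [CommRing R] [CommRing A] [Algebra R A] {D : Derivation R A A}
  {x y u v : A} (hx : D x = 0) (hy : D y = 0)

include hx hy in
lemma derivation_pow_mul_pow_eq_zero (a b : ℕ) : D (x ^ a * y ^ b) = 0 := by
  simp only [Derivation.leibniz, Derivation.leibniz_pow, hx, hy, smul_zero, add_zero]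

variable (hu : D u = x) (hv : D v = y)
include hx hy hu hv

lemma derivation_monomial (i j k l : ℕ) :
    D (x ^ i * y ^ j * u ^ k * v ^ l) =
      (k : R) • (x ^ (i + 1) * y ^ j * u ^ (k - 1) * v ^ l) +
        (l : R) • (x ^ i * y ^ (j + 1) * u ^ k * v ^ (l - 1)) := by
  simp only [Derivation.leibniz, Derivation.leibniz_pow, hx, hy, hu, hv, smul_eq_mul,
    Nat.cast_smul_eq_nsmul, nsmul_eq_mul]
  ring

lemma derivation_pow_monomial {N k l : ℕ} (hN : k + l = N) (i j : ℕ) :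
    ((D : A →ₗ[R] A) ^ N) (x ^ i * y ^ j * u ^ k * v ^ l) =
      (N.factorial : R) • (x ^ (i + k) * y ^ (j + l)) := by
  induction N generalizing i j k l with
  | zero =>
    obtain ⟨rfl, rfl⟩ : k = 0 ∧ l = 0 := by omega
    simp
  | succ N ih =>
    have hk : (k : R) • ((D : A →ₗ[R] A) ^ N) (x ^ (i + 1) * y ^ j * u ^ (k - 1) * v ^ l) =
        (k : R) • (N.factorial : R) • (x ^ (i + k) * y ^ (j + l)) := by
      rcases k with _ | k
      · simp
      · rw [ih (by omega), Nat.add_sub_cancel, Nat.add_right_comm, ← add_assoc]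
    have hl : (l : R) • ((D : A →ₗ[R] A) ^ N) (x ^ i * y ^ (j + 1) * u ^ k * v ^ (l - 1)) =
        (l : R) • (N.factorial : R) • (x ^ (i + k) * y ^ (j + l)) := by
      rcases l with _ | l
      · simp
      · rw [ih (by omega), Nat.add_sub_cancel, Nat.add_right_comm, ← add_assoc]
    rw [pow_succ, Module.End.mul_apply, Derivation.coeFn_coe,
      derivation_monomial hx hy hu hv, map_add, map_smul, map_smul, hk, hl, ← add_smul,
      smul_smul, ← Nat.cast_add, hN, ← Nat.cast_mul, Nat.factorial_succ]

lemma bidegreeFiltration_le_ker (W : Set (ℤ × ℤ)) (N : ℕ) :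
    bidegreeFiltration R x y u v W N ≤ LinearMap.ker ((D : A →ₗ[R] A) ^ N) := by
  rw [bidegreeFiltration, Submodule.span_le]
  refine Set.iUnion₂_subset ?_
  rintro n hn _ ⟨i, j, k, l, hkl, -, rfl⟩
  obtain ⟨m, rfl⟩ := Nat.exists_eq_add_of_lt hn
  rw [SetLike.mem_coe, LinearMap.mem_ker, show n + m + 1 = m + 1 + n by omega, pow_add,
    Module.End.mul_apply, derivation_pow_monomial hx hy hu hv hkl, map_smul, pow_succ,
    Module.End.mul_apply, Derivation.coeFn_coe, derivation_pow_mul_pow_eq_zero hx hy, map_zero,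
    smul_zero]

open scoped Pointwise in
lemma derivation_pow_image_monomialsOfBidegree (W : Set (ℤ × ℤ)) (N : ℕ) :
    ((D : A →ₗ[R] A) ^ N) '' monomialsOfBidegree x y u v W N =
      (N.factorial : R) • {a | ∃ α β : ℕ, N ≤ α + β ∧ ((α : ℤ) - N, (β : ℤ) - N) ∈ W ∧
        a = x ^ α * y ^ β} := by
  ext s
  constructor
  · rintro ⟨_, ⟨i, j, k, l, hN, hW, rfl⟩, rfl⟩
    refine ⟨_, ⟨i + k, j + l, by omega, ?_, rfl⟩,
      (derivation_pow_monomial hx hy hu hv hN i j).symm⟩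
    convert hW using 2 <;> omega
  · rintro ⟨_, ⟨α, β, hN, hW, rfl⟩, rfl⟩
    obtain ⟨i, j, k, l, rfl, rfl, rfl⟩ : ∃ i j k l, α = i + k ∧ β = j + l ∧ N = k + l :=
      ⟨α - min α N, β - (N - min α N), min α N, N - min α N, by omega, by omega, by omega⟩
    refine ⟨_, ⟨i, j, k, l, rfl, ?_, rfl⟩, derivation_pow_monomial hx hy hu hv rfl i j⟩
    convert hW using 2 <;> push_cast <;> ring

end Derivation

section KernelFiltration

variable {K A : Type*} [Field K] [CharZero K] [CommRing A] [Algebra K A] {D : Derivation K A A}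
  {x y u v : A} (hdet : x * v - y * u = 1) (hx : D x = 0) (hy : D y = 0)
  (hu : D u = x) (hv : D v = y) (hxy : AlgebraicIndependent K ![x, y])
include hdet hx hy hu hv hxy

lemma mem_bidegreeFiltration_of_derivation_pow_eq_zero {W : Set (ℤ × ℤ)} {N : ℕ} {c : A}
    (hc : c ∈ Submodule.span K (monomialsOfBidegree x y u v W N))
    (hDc : ((D : A →ₗ[K] A) ^ N) c = 0) : c ∈ bidegreeFiltration K x y u v W N := by
  have hN : (N.factorial : K) ≠ 0 := Nat.cast_ne_zero.2 N.factorial_ne_zero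
  have hindep := (linearIndependent_pow_mul_pow hxy).units_smul fun _ ↦
    Units.mk0 (N.factorial : K) hN
  refine mem_of_mem_span_of_map_eq_zero hindep.linearIndepOn_id ?_ ?_ hc hDc
  · rintro _ ⟨i, j, k, l, hkl, -, rfl⟩
    exact ⟨(i + k, j + l), (derivation_pow_monomial hx hy hu hv hkl i j).symm⟩
  · rintro _ ⟨i, j, k, l, hkl, hW, rfl⟩ _ ⟨i', j', k', l', hkl', -, rfl⟩ heq
    rw [derivation_pow_monomial hx hy hu hv hkl, derivation_pow_monomial hx hy hu hv hkl'] at heq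
    have hexp : (i + k, j + l) = (i' + k', j' + l') := hindep.injective heq
    rw [Prod.mk.injEq] at hexp
    rw [← hkl]
    exact monomial_sub_monomial_mem_bidegreeFiltration hdet hW hexp.1 hexp.2 (hkl.trans hkl'.symm)

lemma bidegreeFiltration_succ_inf_ker_le (W : Set (ℤ × ℤ)) (N : ℕ) :
    bidegreeFiltration K x y u v W (N + 1) ⊓ LinearMap.ker ((D : A →ₗ[K] A) ^ N) ≤
      bidegreeFiltration K x y u v W N := by
  rintro c ⟨hc, hDc⟩
  rw [SetLike.mem_coe, bidegreeFiltration_succ] at hc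
  obtain ⟨a, ha, b, hb, rfl⟩ := Submodule.mem_sup.1 hc
  have hDa := bidegreeFiltration_le_ker hx hy hu hv W N ha
  refine add_mem ha (mem_bidegreeFiltration_of_derivation_pow_eq_zero hdet hx hy hu hv hxy hb ?_)
  exact ((LinearMap.ker _).add_mem_iff_right hDa).1 hDc

lemma iSup_bidegreeFiltration_inf_ker (W : Set (ℤ × ℤ)) (N : ℕ) :
    (⨆ M, bidegreeFiltration K x y u v W M) ⊓ LinearMap.ker ((D : A →ₗ[K] A) ^ N) =
      bidegreeFiltration K x y u v W N := by
  refine le_antisymm ?_ (le_inf (le_iSup _ N) (bidegreeFiltration_le_ker hx hy hu hv W N))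
  rintro c ⟨hc, hDc⟩
  obtain ⟨M, hM⟩ :=
    (Submodule.mem_iSup_of_directed _ bidegreeFiltration_mono.directed_le).1 hc
  replace hM := bidegreeFiltration_mono (le_max_right N M) hM
  -- As `c` is killed by all `D ^ n` with `n ≥ N`, its degree in `u, v` drops one step at a time.
  refine Nat.decreasingInduction' (P := fun n ↦ c ∈ bidegreeFiltration K x y u v W n)
    (fun n _ hNn hn ↦ ?_) (le_max_left N M) hM
  exact bidegreeFiltration_succ_inf_ker_le hdet hx hy hu hv hxy W n
    ⟨hn, Module.End.pow_map_zero_of_le hNn hDc⟩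

theorem map_derivation_pow_inf_ker (W : Set (ℤ × ℤ)) (ν : ℕ) :
    Submodule.map ((D : A →ₗ[K] A) ^ ν)
        (Submodule.span K {a | ∃ i j k l : ℕ, ((i : ℤ) - l, (j : ℤ) - k) ∈ W ∧
            a = x ^ i * y ^ j * u ^ k * v ^ l} ⊓
          LinearMap.ker ((D : A →ₗ[K] A) ^ (ν + 1))) =
      Submodule.span K {a | ∃ α β : ℕ, ν ≤ α + β ∧ ((α : ℤ) - ν, (β : ℤ) - ν) ∈ W ∧
        a = x ^ α * y ^ β} := by
  have hν : IsUnit (ν.factorial : K) := (Nat.cast_ne_zero.2 ν.factorial_ne_zero).isUnit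
  rw [← iSup_bidegreeFiltration, iSup_bidegreeFiltration_inf_ker hdet hx hy hu hv hxy,
    bidegreeFiltration_succ, Submodule.map_sup,
    LinearMap.le_ker_iff_map.1 (bidegreeFiltration_le_ker hx hy hu hv W ν), bot_sup_eq,
    Submodule.map_span, derivation_pow_image_monomialsOfBidegree hx hy hu hv,
    Submodule.span_smul_eq_of_isUnit _ _ hν]

end KernelFiltration

lemma add_mul_le_iff_le_add_and_nonneg {p q : ℕ} (hpq : 0 < p + q) {ν α β : ℕ} :
    (p + q) * ν ≤ p * α + q * β ↔
      ν ≤ α + β ∧ 0 ≤ (p : ℤ) * ((α : ℤ) - ν) + (q : ℤ) * ((β : ℤ) - ν) := by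
  have hweight : (p + q) * ν ≤ p * α + q * β ↔
      0 ≤ (p : ℤ) * ((α : ℤ) - ν) + (q : ℤ) * ((β : ℤ) - ν) := by
    zify
    constructor <;> intro h <;> linarith
  rw [← hweight, iff_and_self]
  intro h
  refine le_of_mul_le_mul_left (h.trans ?_) hpq
  calc p * α + q * β ≤ p * (α + β) + q * (α + β) := by gcongr <;> omega
    _ = (p + q) * (α + β) := (add_mul ..).symm

theorem stmt16_general {K A : Type*} [Field K] [CharZero K] [CommRing A] [Algebra K A]
    {x y u v : A} (hdet : x * v - y * u = 1) (hxy : AlgebraicIndependent K ![x, y])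
    {p q : ℕ} (hpq : 0 < p + q) (D : Derivation K A A)
    (hx : D x = 0) (hy : D y = 0) (hu : D u = x) (hv : D v = y) (ν : ℕ) :
    {s : A | ∃ c ∈ Submodule.span K {a : A | ∃ i j k l : ℕ,
          0 ≤ (p : ℤ) * ((i : ℤ) - (l : ℤ)) + (q : ℤ) * ((j : ℤ) - (k : ℤ)) ∧
          a = x ^ i * y ^ j * u ^ k * v ^ l}, (⇑D)^[ν + 1] c = 0 ∧ (⇑D)^[ν] c = s} =
      ↑(Submodule.span K {a : A | ∃ α β : ℕ,
          (p + q) * ν ≤ p * α + q * β ∧ a = x ^ α * y ^ β}) := by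
  have hmap := map_derivation_pow_inf_ker hdet hx hy hu hv hxy
    {w | 0 ≤ (p : ℤ) * w.1 + (q : ℤ) * w.2} ν
  simp only [add_mul_le_iff_le_add_and_nonneg hpq, and_assoc]
  refine Eq.trans ?_ (congrArg SetLike.coe hmap)
  ext s
  simp only [Submodule.map_coe, Set.mem_image, SetLike.mem_coe, Submodule.mem_inf,
    LinearMap.mem_ker, Module.End.pow_apply, Derivation.coeFn_coe, and_assoc]
  rfl

lemma exists_sl2R_algHom_of_mul_sub_mul_eq_one {B : Type*} [CommRing B] [Algebra ℂ B]
    {x y u v : B} (hdet : x * v - y * u = 1) :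
    ∃ F : SL2R →ₐ[ℂ] B, F sx = x ∧ F sy = y ∧ F su = u ∧ F sv = v := by
  let f : MvPolynomial (Fin 4) ℂ →ₐ[ℂ] B := aeval ![x, y, u, v]
  have hf : sl2Ideal ≤ RingHom.ker f := by
    rw [sl2Ideal, Ideal.span_le, Set.singleton_subset_iff]
    simp [f, RingHom.mem_ker, hdet]
  refine ⟨Ideal.Quotient.liftₐ sl2Ideal f fun a ha ↦ hf ha, ?_⟩
  change f (X 0) = x ∧ f (X 1) = y ∧ f (X 2) = u ∧ f (X 3) = v
  simp [f]

lemma sx_mul_sv_sub_sy_mul_su : sx * sv - sy * su = 1 :=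
  Ideal.Quotient.eq.2 (Ideal.subset_span rfl)

/-- Evaluate at the point `!![X, Y; 0, 1/X]` of `SL₂` over `ℂ(X, Y)`. -/
lemma algebraicIndependent_sx_sy : AlgebraicIndependent ℂ ![sx, sy] := by
  let ι := IsScalarTower.toAlgHom ℂ (MvPolynomial (Fin 2) ℂ)
    (FractionRing (MvPolynomial (Fin 2) ℂ))
  have hι : Function.Injective ι := IsFractionRing.injective _ _
  have hX : ι (X 0) ≠ 0 := (map_ne_zero_iff ι hι).2 (X_ne_zero 0)
  obtain ⟨F, hFx, hFy, -⟩ := exists_sl2R_algHom_of_mul_sub_mul_eq_one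
    (x := ι (X 0)) (y := ι (X 1)) (u := 0) (v := (ι (X 0))⁻¹)
    (by rw [mul_inv_cancel₀ hX, mul_zero, sub_zero])
  refine AlgebraicIndependent.of_comp F ?_
  convert (algebraicIndependent_X (Fin 2) ℂ).map' hι using 1
  ext i
  fin_cases i
  · exact hFx
  · exact hFy

/-- For coprime positive integers `p, q` and every `ν`, the set
`m_ν(B(p,q)) = D^ν(B(p,q) ∩ ker D^{ν+1})` equals the ℂ-linear span of the monomials
`x^α y^β` with `pα + qβ ≥ (p+q)ν`. -/
theorem stmt16 (p q : ℕ) (hp : 0 < p) (hq : 0 < q) (hpq : Nat.Coprime p q)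
    (D : Derivation ℂ SL2R SL2R)
    (hx : D sx = 0) (hy : D sy = 0) (hu : D su = sx) (hv : D sv = sy) (ν : ℕ) :
    {s : SL2R | ∃ c ∈ Bpq p q, (⇑D)^[ν + 1] c = 0 ∧ (⇑D)^[ν] c = s} =
      ↑(Submodule.span ℂ {a : SL2R | ∃ α β : ℕ,
          (p + q) * ν ≤ p * α + q * β ∧ a = sx ^ α * sy ^ β}) :=
  stmt16_general sx_mul_sv_sub_sy_mul_su algebraicIndependent_sx_sy (Nat.add_pos_left hp q)
    D hx hy hu hv ν

end
end

section
/- Let p, q be coprime positive integers. In A = ℂ[X,Y,U,V]/⟨XV − YU − 1⟩, the ℂ-linear span of the images of the monomials x^i y^j u^k v^ℓ with p(i − ℓ) + q(j − k) = 0 equals the ℂ-subalgebra of A generated by the three elements x^q u^p, x v, and y^p v^q. (The ring of invariants of the 𝔾_m-action on SL₂ given by (x, u; y, v)·λ = (λ^p x, λ^{-q} u; λ^q y, λ^{-p} v) is generated by x^q u^p, xv, y^p v^q; this is the algebraic content of the statement that ψ(x,u;y,v) = (x^q u^p, xv, y^p v^q) is the quotient morphism.) -/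
/-!
A monomial `x^i y^j u^k v^l` has weight zero iff `p (i - l) = q (k - j)`. As `p` and `q` are
coprime, this means `i - l = q t` and `k - j = p t` for some integer `t`, so the monomial is
`(xv)^l (yu)^j (x^q u^p)^t` if `t ≥ 0`, and `(xv)^i (yu)^k (y^p v^q)^(-t)` otherwise. Thus the
monoid of weight-zero monomials is generated by `x^q u^p`, `xv`, `yu`, `y^p v^q` before any
relation is imposed, and the equation `yu = xv - 1` of `SL₂` makes the generator `yu` redundant.
-/

open MvPolynomial

noncomputable section

lemma exists_eq_mul_of_isCoprime_of_mul_add_mul_eq_zero {R : Type*} [CommRing R] {p q a b : R}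
    (hpq : IsCoprime p q) (h : p * a + q * b = 0) : ∃ t, a = q * t ∧ b = -(p * t) := by
  obtain ⟨r, s, hrs⟩ := hpq
  refine ⟨s * a - r * b, ?_, ?_⟩
  · linear_combination r * h - a * hrs
  · linear_combination s * h - b * hrs

/-- The monoid of monomials `x^i y^j u^k v^l` of weight zero, where `x`, `y`, `u`, `v` have weights
`p`, `q`, `-q`, `-p`; in the coordinate ring of `SL₂`, they span the invariants of the
`𝔾ₘ`-action. Its elements are values in `M`, so one expression of weight zero suffices, even if
`M` has relations. -/
def weightZeroMonomials {M : Type*} [CommMonoid M] (p q : ℤ) (x y u v : M) : Submonoid M where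
  carrier := {a | ∃ i j k l : ℕ, p * ((i : ℤ) - (l : ℤ)) + q * ((j : ℤ) - (k : ℤ)) = 0 ∧
    a = x ^ i * y ^ j * u ^ k * v ^ l}
  one_mem' := ⟨0, 0, 0, 0, by simp, by simp⟩
  mul_mem' := by
    rintro _ _ ⟨i, j, k, l, h, rfl⟩ ⟨i', j', k', l', h', rfl⟩
    refine ⟨i + i', j + j', k + k', l + l', by push_cast; linear_combination h + h', ?_⟩
    simp only [pow_add]
    ac_rfl

section Monoid

variable {M : Type*} [CommMonoid M] (x y u v : M) {p q : ℕ}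

lemma monomial_mem_closure_of_weight_eq_zero (hpq : p.Coprime q) {i j k l : ℕ}
    (h : (p : ℤ) * ((i : ℤ) - (l : ℤ)) + (q : ℤ) * ((j : ℤ) - (k : ℤ)) = 0) :
    x ^ i * y ^ j * u ^ k * v ^ l ∈
      Submonoid.closure {y * u, x ^ q * u ^ p, x * v, y ^ p * v ^ q} := by
  set S := Submonoid.closure {y * u, x ^ q * u ^ p, x * v, y ^ p * v ^ q}
  have hyu : y * u ∈ S := Submonoid.subset_closure (by simp)
  have hxu : x ^ q * u ^ p ∈ S := Submonoid.subset_closure (by simp)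
  have hxv : x * v ∈ S := Submonoid.subset_closure (by simp)
  have hyv : y ^ p * v ^ q ∈ S := Submonoid.subset_closure (by simp)
  obtain ⟨t, hil, hjk⟩ := exists_eq_mul_of_isCoprime_of_mul_add_mul_eq_zero hpq.isCoprime h
  obtain ⟨n, rfl | rfl⟩ := t.eq_nat_or_neg
  · obtain rfl : i = l + q * n := by zify; linear_combination hil
    obtain rfl : k = j + p * n := by zify; linear_combination -hjk
    have factorization : x ^ (l + q * n) * y ^ j * u ^ (j + p * n) * v ^ l =
        (x * v) ^ l * (y * u) ^ j * (x ^ q * u ^ p) ^ n := by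
      simp only [pow_add, pow_mul, mul_pow]
      ac_rfl
    rw [factorization]
    exact mul_mem (mul_mem (pow_mem hxv l) (pow_mem hyu j)) (pow_mem hxu n)
  · obtain rfl : l = i + q * n := by zify; linear_combination -hil
    obtain rfl : j = k + p * n := by zify; linear_combination hjk
    have factorization : x ^ i * y ^ (k + p * n) * u ^ k * v ^ (i + q * n) =
        (x * v) ^ i * (y * u) ^ k * (y ^ p * v ^ q) ^ n := by
      simp only [pow_add, pow_mul, mul_pow]
      ac_rfl
    rw [factorization]
    exact mul_mem (mul_mem (pow_mem hxv i) (pow_mem hyu k)) (pow_mem hyv n)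

lemma weightZeroMonomials_eq_closure (hpq : p.Coprime q) :
    weightZeroMonomials (p : ℤ) q x y u v =
      Submonoid.closure {y * u, x ^ q * u ^ p, x * v, y ^ p * v ^ q} := by
  refine le_antisymm ?_ (Submonoid.closure_le.mpr ?_)
  · rintro _ ⟨i, j, k, l, h, rfl⟩
    exact monomial_mem_closure_of_weight_eq_zero x y u v hpq h
  · rintro _ (rfl | rfl | rfl | rfl)
    · exact ⟨0, 1, 1, 0, by simp, by simp⟩
    · exact ⟨q, 0, p, 0, by push_cast; ring, by simp⟩
    · exact ⟨1, 0, 0, 1, by simp, by simp⟩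
    · exact ⟨0, p, 0, q, by push_cast; ring, by simp⟩

end Monoid

lemma span_weightZeroMonomials_eq_adjoin (R : Type*) {A : Type*} [CommSemiring R] [CommSemiring A]
    [Algebra R A] (x y u v : A) {p q : ℕ} (hpq : p.Coprime q) :
    Submodule.span R (weightZeroMonomials (p : ℤ) q x y u v : Set A) =
      (Algebra.adjoin R {y * u, x ^ q * u ^ p, x * v, y ^ p * v ^ q}).toSubmodule := by
  rw [weightZeroMonomials_eq_closure x y u v hpq, Algebra.adjoin_eq_span]

theorem stmt17_general {R A : Type*} [CommRing R] [CommRing A] [Algebra R A] {x y u v : A}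
    (hdet : x * v - y * u = 1) {p q : ℕ} (hpq : p.Coprime q) :
    (Submodule.span R (weightZeroMonomials (p : ℤ) q x y u v : Set A) : Set A) =
      Algebra.adjoin R {x ^ q * u ^ p, x * v, y ^ p * v ^ q} := by
  have hyu : y * u ∈ Algebra.adjoin R {x ^ q * u ^ p, x * v, y ^ p * v ^ q} := by
    rw [show y * u = x * v - 1 by linear_combination -hdet]
    exact sub_mem (Algebra.subset_adjoin (by simp)) (one_mem _)
  rw [span_weightZeroMonomials_eq_adjoin R x y u v hpq, Subalgebra.coe_toSubmodule,
    ← Algebra.adjoin_insert_adjoin, Set.insert_eq_of_mem hyu, Algebra.adjoin_eq]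

/-- For coprime positive integers `p, q`, the ℂ-linear span of the monomials
`x^i y^j u^k v^ℓ` of weight `p(i − ℓ) + q(j − k) = 0` equals the ℂ-subalgebra of `A`
generated by `x^q u^p`, `xv`, and `y^p v^q` (the ring of invariants of the 𝔾ₘ-action on
`SL₂` of weights `p, q, −q, −p`). -/
theorem stmt17 (p q : ℕ) (hp : 0 < p) (hq : 0 < q) (hpq : Nat.Coprime p q) :
    (↑(Submodule.span ℂ {a : SL2R | ∃ i j k l : ℕ,
        (p : ℤ) * ((i : ℤ) - (l : ℤ)) + (q : ℤ) * ((j : ℤ) - (k : ℤ)) = 0 ∧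
        a = sx ^ i * sy ^ j * su ^ k * sv ^ l}) : Set SL2R) =
      ↑(Algebra.adjoin ℂ {sx ^ q * su ^ p, sx * sv, sy ^ p * sv ^ q}) :=
  stmt17_general sx_mul_sv_sub_sy_mul_su hpq

end
end

section
/- Let p, q be coprime positive integers. The kernel of the ℂ-algebra homomorphism ℂ[T₁, T₂, T₃] → A = ℂ[X,Y,U,V]/⟨XV − YU − 1⟩ sending T₁ ↦ x^q u^p, T₂ ↦ x v, T₃ ↦ y^p v^q is the principal ideal generated by T₁T₃ − T₂^q (T₂ − 1)^p. (Hence the quotient SL₂ /\!\!/ 𝔾_m is the hypersurface Y = {(a,b,c) ∈ 𝔸³ : ac = b^q (b−1)^p}; note (x^q u^p)(y^p v^q) = (xv)^q (yu)^p = (xv)^q (xv − 1)^p in A.) -/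
/-!
The relation `(x^q u^p) (y^p v^q) = r(x v)`, `r = T^q (T - 1)^p`, puts `f = T₁T₃ − r(T₂)` in the
kernel. Conversely, since `T₁T₃` is a polynomial in `T₂` modulo `f`, every `F` has a multiple
`T₁^N F` congruent modulo `f` to some `G(T₁, T₂)`. If `F` is in the kernel then
`G(x^q u^p, x v) = 0`, so `G = 0` because `x^q u^p` and `x v` are algebraically independent: under
`x = u = t`, `v = b / t`, `y = (b - 1) / t` they become `t^(p+q)` and `b`. Hence `f ∣ T₁^N F`, and
`T₁` can be cancelled because it is a nonzerodivisor modulo `f`, as `f` is a nonzerodivisor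
modulo `T₁`.
-/

open MvPolynomial

noncomputable section

open scoped nonZeroDivisors Polynomial

section Cancellation

lemma dvd_of_dvd_pow_mul_of_dvd_mul {C : Type*} [CommRing C] {a t r g : C} {n : ℕ}
    (ha : IsLeftRegular a) (hr : ∀ h, a ∣ r * h → a ∣ h) (hg : a * t - r ∣ a ^ n * g) :
    a * t - r ∣ g := by
  induction n with
  | zero => simpa only [pow_zero, one_mul] using hg
  | succ n ih =>
    obtain ⟨h, hh⟩ := hg
    have hdvd : a ∣ r * h := ⟨t * h - a ^ n * g, by linear_combination hh⟩
    obtain ⟨k, rfl⟩ := hr h hdvd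
    exact ih ⟨k, ha (by linear_combination hh)⟩

variable {R σ : Type*} [CommRing R]

lemma X_dvd_iff_aeval_update_eq_zero [DecidableEq σ] {i : σ} {g : MvPolynomial σ R} :
    X i ∣ g ↔ aeval (Function.update X i (0 : MvPolynomial σ R)) g = 0 := by
  let I : Ideal (MvPolynomial σ R) := Ideal.span {X i}
  have hmod : (Ideal.Quotient.mkₐ R I).comp (aeval (Function.update X i 0)) =
      Ideal.Quotient.mkₐ R I := by
    ext j
    rcases eq_or_ne j i with rfl | hj
    · simpa using (Ideal.Quotient.eq_zero_iff_mem.2 (Ideal.mem_span_singleton_self (X j))).symm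
    · simp [hj]
  constructor
  · rintro ⟨h, rfl⟩
    simp
  · intro hg
    have hmk : Ideal.Quotient.mkₐ R I g = 0 := by
      rw [← hmod, AlgHom.comp_apply, hg, map_zero]
    exact Ideal.mem_span_singleton.1 (Ideal.Quotient.eq_zero_iff_mem.1 hmk)

lemma C_mem_nonZeroDivisors {r : R} (hr : r ∈ R⁰) :
    (C r : MvPolynomial σ R) ∈ (MvPolynomial σ R)⁰ := by
  refine mem_nonZeroDivisors_iff_left.2 fun g hg => MvPolynomial.ext _ _ fun m => ?_
  have hm : r * coeff m g = 0 := by rw [← coeff_C_mul, hg, coeff_zero]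
  rw [(mul_left_mem_nonZeroDivisors_eq_zero_iff hr).1 hm, coeff_zero]

lemma toMvPolynomial_mem_nonZeroDivisors {r : R[X]} (hr : r ∈ R[X]⁰) (i : σ) :
    r.toMvPolynomial i ∈ (MvPolynomial σ R)⁰ := by
  classical
  -- Seen as a polynomial in the other variables over `R[X i]`, `r(X i)` is a constant.
  let e : MvPolynomial σ R ≃ₐ[R] MvPolynomial {j // j ≠ i} R[X] :=
    (renameEquiv R (Equiv.optionSubtypeNe i).symm).trans (optionEquivRight R _)
  have hcomp : e.toAlgHom.comp (Polynomial.toMvPolynomial i) =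
      IsScalarTower.toAlgHom R R[X] _ := by
    ext
    simp [e]
  have he : e (r.toMvPolynomial i) = C r := DFunLike.congr_fun hcomp r
  exact mem_nonZeroDivisors_of_injective e.injective (he ▸ C_mem_nonZeroDivisors hr)

lemma X_dvd_of_X_dvd_toMvPolynomial_mul {r : R[X]} (hr : r ∈ R[X]⁰) {i j : σ}
    (hij : j ≠ i) {h : MvPolynomial σ R} (hdvd : X i ∣ r.toMvPolynomial j * h) : X i ∣ h := by
  classical
  rw [X_dvd_iff_aeval_update_eq_zero] at hdvd ⊢
  rw [map_mul, aeval_toMvPolynomial, Function.update_of_ne hij] at hdvd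
  exact (mul_left_mem_nonZeroDivisors_eq_zero_iff (toMvPolynomial_mem_nonZeroDivisors hr j)).1 hdvd

end Cancellation

section Kernel

variable {R B : Type*} [CommRing R] [CommRing B] [Algebra R B]

lemma exists_dvd_X_zero_pow_mul_sub_rename (r : R[X]) (F : MvPolynomial (Fin 3) R) :
    ∃ (N : ℕ) (G : MvPolynomial (Fin 2) R),
      X 0 * X 2 - r.toMvPolynomial 1 ∣ X 0 ^ N * F - rename Fin.castSucc G := by
  induction F using MvPolynomial.induction_on with
  | C a => exact ⟨0, C a, by simp⟩
  | add F₁ F₂ h₁ h₂ =>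
    obtain ⟨N₁, G₁, k₁, h₁⟩ := h₁
    obtain ⟨N₂, G₂, k₂, h₂⟩ := h₂
    refine ⟨N₁ + N₂, X 0 ^ N₂ * G₁ + X 0 ^ N₁ * G₂, X 0 ^ N₂ * k₁ + X 0 ^ N₁ * k₂, ?_⟩
    simp only [map_add, map_mul, map_pow, rename_X, Fin.castSucc_zero]
    linear_combination X 0 ^ N₂ * h₁ + X 0 ^ N₁ * h₂
  | mul_X F i h =>
    obtain ⟨N, G, k, h⟩ := h
    cases i using Fin.lastCases with
    | cast i =>
      refine ⟨N, G * X i, k * X i.castSucc, ?_⟩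
      rw [map_mul, rename_X]
      linear_combination X i.castSucc * h
    | last =>
      -- `T₁^(N+1) F T₃ ≡ G T₁ T₃ ≡ G r(T₂)`
      refine ⟨N + 1, G * r.toMvPolynomial 1, X 0 * X 2 * k + rename Fin.castSucc G, ?_⟩
      rw [map_mul, rename_toMvPolynomial, Fin.castSucc_one, show Fin.last 2 = 2 from rfl]
      linear_combination X 0 * X 2 * h

theorem ker_aeval_eq_span_of_algebraicIndependent {a b c : B} {r : R[X]}
    (hr : r ∈ R[X]⁰) (hab : AlgebraicIndependent R ![a, b])
    (habc : a * c = Polynomial.aeval b r) :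
    RingHom.ker (aeval ![a, b, c] : MvPolynomial (Fin 3) R →ₐ[R] B) =
      Ideal.span {X 0 * X 2 - r.toMvPolynomial 1} := by
  have hf : aeval ![a, b, c] (X 0 * X 2 - r.toMvPolynomial 1 : MvPolynomial (Fin 3) R) = 0 := by
    simp [habc]
  refine le_antisymm (fun F hF => ?_) ?_
  · obtain ⟨N, G, hG⟩ := exists_dvd_X_zero_pow_mul_sub_rename r F
    have hGab : aeval ![a, b] G = 0 := by
      have hdvd := map_dvd (aeval ![a, b, c]) hG
      have hcomp : ![a, b, c] ∘ Fin.castSucc = ![a, b] := by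
        ext i
        fin_cases i <;> rfl
      rw [hf, zero_dvd_iff, map_sub, map_mul, RingHom.mem_ker.1 hF, mul_zero, zero_sub,
        neg_eq_zero, aeval_rename, hcomp] at hdvd
      exact hdvd
    have hG0 : G = 0 := hab.eq_zero_of_aeval_eq_zero G hGab
    rw [hG0, map_zero, sub_zero] at hG
    exact Ideal.mem_span_singleton.2 <| dvd_of_dvd_pow_mul_of_dvd_mul isRegular_X.left
      (fun h => X_dvd_of_X_dvd_toMvPolynomial_mul hr (by decide)) hG
  · exact (Ideal.span_singleton_le_iff_mem _).2 hf

end Kernel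

lemma algebraicIndependent_X_pow_X {R : Type*} [CommRing R] {n : ℕ} (hn : 0 < n) :
    AlgebraicIndependent R ![(X 0 ^ n : MvPolynomial (Fin 2) R), X 1] := by
  have hpoly : ∀ i, Transcendental R (![Polynomial.X ^ n, Polynomial.X] i : R[X]) := by
    intro i
    fin_cases i
    · exact (Polynomial.transcendental_X R).pow hn
    · exact Polynomial.transcendental_X R
  convert (algebraicIndependent_X (Fin 2) R).polynomial_aeval_of_transcendental hpoly using 1
  ext1 i
  fin_cases i <;> simp

/-- The coordinate ring `R[X, Y, U, V]/⟨XV − YU − 1⟩` of `SL₂` over `R`, in the variables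
`X = X 0`, `Y = X 1`, `U = X 2`, `V = X 3`; it is `SL2R` for `R = ℂ`. -/
abbrev SL2CoordinateRing (R : Type*) [CommRing R] : Type _ :=
  MvPolynomial (Fin 4) R ⧸ Ideal.span {(X 0 * X 3 - X 1 * X 2 - 1 : MvPolynomial (Fin 4) R)}

namespace SL2CoordinateRing

/-- The entries `x, y, u, v` (in this order) of the generic matrix of `SL₂`, as elements of its
coordinate ring. -/
def entry (R : Type*) [CommRing R] (i : Fin 4) : SL2CoordinateRing R :=
  Ideal.Quotient.mk _ (X i)

variable {R B : Type*} [CommRing R] [CommRing B] [Algebra R B]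

lemma entry_det : entry R 0 * entry R 3 - entry R 1 * entry R 2 = 1 :=
  sub_eq_zero.1 (Ideal.Quotient.eq_zero_iff_mem.2 (Ideal.mem_span_singleton_self _))

lemma exists_algHom_entry_eq {m : Fin 4 → B} (hm : m 0 * m 3 - m 1 * m 2 = 1) :
    ∃ φ : SL2CoordinateRing R →ₐ[R] B, ∀ i, φ (entry R i) = m i := by
  have hker : Ideal.span {(X 0 * X 3 - X 1 * X 2 - 1 : MvPolynomial (Fin 4) R)} ≤
      RingHom.ker (aeval m : MvPolynomial (Fin 4) R →ₐ[R] B) := by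
    simp [RingHom.mem_ker, hm]
  exact ⟨Ideal.Quotient.liftₐ _ (aeval m) hker, fun i => aeval_X m i⟩

theorem algebraicIndependent_entry_pow_mul_pow {p q : ℕ} (hpq : 0 < p + q) :
    AlgebraicIndependent R ![entry R 0 ^ q * entry R 2 ^ p, entry R 0 * entry R 3] := by
  let L := Localization.Away (X 0 : MvPolynomial (Fin 2) R)
  let ι : MvPolynomial (Fin 2) R →ₐ[R] L := IsScalarTower.toAlgHom R _ L
  have hι : Function.Injective ι :=
    IsLocalization.injective L (M := .powers (X 0))
      (Submonoid.powers_le.2 isRegular_X.mem_nonZeroDivisors)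
  obtain ⟨s, hs⟩ : ∃ s, ι (X 0) * s = 1 :=
    (IsLocalization.Away.algebraMap_isUnit (X 0 : MvPolynomial (Fin 2) R)).exists_right_inv
  obtain ⟨φ, hφ⟩ := exists_algHom_entry_eq (R := R)
    (m := ![ι (X 0), (ι (X 1) - 1) * s, ι (X 0), ι (X 1) * s])
    (show ι (X 0) * (ι (X 1) * s) - (ι (X 1) - 1) * s * ι (X 0) = 1 by linear_combination hs)
  have hfst : φ (entry R 0 ^ q * entry R 2 ^ p) = ι (X 0 ^ (p + q)) := by
    simp only [map_mul, map_pow, hφ, Matrix.cons_val]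
    ring
  have hsnd : φ (entry R 0 * entry R 3) = ι (X 1) := by
    simp only [map_mul, hφ, Matrix.cons_val]
    linear_combination ι (X 1) * hs
  have himage : φ ∘ ![entry R 0 ^ q * entry R 2 ^ p, entry R 0 * entry R 3] =
      ι ∘ ![X 0 ^ (p + q), X 1] := by
    ext1 i
    fin_cases i
    exacts [hfst, hsnd]
  exact .of_comp φ (himage ▸ (algebraicIndependent_X_pow_X hpq).map' hι)

end SL2CoordinateRing

open SL2CoordinateRing in
theorem stmt18_general (R : Type*) [CommRing R] (p q : ℕ) (hpq : 0 < p + q) :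
    RingHom.ker (aeval ![entry R 0 ^ q * entry R 2 ^ p, entry R 0 * entry R 3,
        entry R 1 ^ p * entry R 3 ^ q] : MvPolynomial (Fin 3) R →ₐ[R] SL2CoordinateRing R) =
      Ideal.span {X 0 * X 2 - (X 1) ^ q * (X 1 - 1) ^ p} := by
  have hr : (Polynomial.X ^ q * (Polynomial.X - 1) ^ p : R[X]).Monic :=
    (Polynomial.monic_X_pow q).mul ((Polynomial.monic_X_sub_C 1).pow p)
  have hrel : entry R 0 ^ q * entry R 2 ^ p * (entry R 1 ^ p * entry R 3 ^ q) =
      Polynomial.aeval (entry R 0 * entry R 3)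
        (Polynomial.X ^ q * (Polynomial.X - 1) ^ p : R[X]) := by
    have hyu : entry R 0 * entry R 3 - 1 = entry R 1 * entry R 2 := by
      linear_combination entry_det (R := R)
    simp only [map_mul, map_pow, map_sub, map_one, Polynomial.aeval_X, hyu]
    ring
  simpa using ker_aeval_eq_span_of_algebraicIndependent hr.mem_nonZeroDivisors
    (algebraicIndependent_entry_pow_mul_pow hpq) hrel

/-- For coprime positive integers `p, q`, the kernel of the ℂ-algebra
homomorphism `ℂ[T₁, T₂, T₃] → A` sending `T₁ ↦ x^q u^p`, `T₂ ↦ xv`, `T₃ ↦ y^p v^q` is the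
principal ideal generated by `T₁T₃ − T₂^q (T₂ − 1)^p`. -/
theorem stmt18 (p q : ℕ) (hp : 0 < p) (hq : 0 < q) (hpq : Nat.Coprime p q) :
    RingHom.ker (aeval ![sx ^ q * su ^ p, sx * sv, sy ^ p * sv ^ q] :
        MvPolynomial (Fin 3) ℂ →ₐ[ℂ] SL2R) =
      Ideal.span {X 0 * X 2 - (X 1) ^ q * (X 1 - 1) ^ p} :=
  stmt18_general ℂ p q (Nat.add_pos_left hp q)

end
end

section
/- The kernel of the ℂ-algebra homomorphism φ : ℂ[T₁, T₂, T₃, T₄, T₅] → ℂ[x, y, t] determined by T₁ ↦ x, T₂ ↦ y, T₃ ↦ xt, T₄ ↦ yt, T₅ ↦ xt² − t is exactly the ideal generated by the three polynomials T₁T₄ − T₂T₃, T₂T₅ + T₄ − T₃T₄, and T₁T₅ − T₃² + T₃. (Hence the subalgebra B = ℂ[x, y, xt, yt, xt² − t] ⊆ ℂ[x, y, t], the coordinate ring of a smooth affine extension of 𝔸²_* × 𝔾_a, is isomorphic to ℂ[T₁,…,T₅] modulo these three relations, and the subvariety Z ⊆ 𝔸⁵ they define is irreducible.) -/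
open MvPolynomial

noncomputable section

/-!
The relations are the `2 × 2` minors of the matrix with rows `(T₁, T₂, T₃ - 1)` and `(T₃, T₄, T₅)`.

Where `T₁` is invertible, `φ` has an inverse: `x = T₁`, `y = T₂`, `t = T₃ / T₁`, since the relations
give `T₄ = T₂T₃ / T₁ = yt` and `T₅ = (T₃² - T₃) / T₁ = xt² - t`. Hence the kernel and the ideal of
relations agree after inverting `T₁`, and it remains to see that `T₁` is a nonzerodivisor modulo the
relations. If `T₁F` is a combination of the minors, then regularity of the entries shows that its
coefficients are, modulo `T₁`, a combination of the two syzygies obtained by repeating a row of the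
matrix. Subtracting these syzygies makes all coefficients divisible by `T₁`, which can be cancelled.
-/

section Regular

variable {S : Type*} [CommRing S]

lemma isSMulRegular_quotient_of_sub_mem {I : Ideal S} {r r' : S}
    (hr : IsSMulRegular (S ⧸ I) r) (h : r' - r ∈ I) : IsSMulRegular (S ⧸ I) r' := by
  refine (isSMulRegular_quotient_iff_mem_of_smul_mem I r').mpr fun x hx => ?_
  refine mem_of_isSMulRegular_quotient_of_smul_mem hr ?_
  have hx' : r • x = r' • x - x * (r' - r) := by simp only [smul_eq_mul]; ring
  exact hx' ▸ sub_mem hx (I.mul_mem_left x h)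

lemma ker_algebraMap_localizationAway_quotient {I : Ideal S} {r : S}
    (hr : IsSMulRegular (S ⧸ I) r) :
    RingHom.ker (algebraMap S (Localization.Away (Ideal.Quotient.mk I r))) = I := by
  have hr' : Ideal.Quotient.mk I r ∈ nonZeroDivisors (S ⧸ I) :=
    mem_nonZeroDivisors_iff_right.mpr fun x hx =>
      hr.right_eq_zero_of_smul (by rwa [Algebra.smul_def, mul_comm])
  rw [IsScalarTower.algebraMap_eq S (S ⧸ I), RingHom.ker_comp_of_injective _
    (IsLocalization.injective _ (Submonoid.powers_le.mpr hr')), Ideal.Quotient.algebraMap_eq,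
    Ideal.mk_ker]

/-- The ideal of the `2 × 2` minors of the matrix with rows `(a, b, c)` and `(d, e, f)`. -/
def minorsIdeal (a b c d e f : S) : Ideal S :=
  Ideal.span {a * e - b * d, b * f - c * e, a * f - c * d}

variable {a b c d e f : S}

lemma exists_row_syzygies_of_minors_mem_span
    (hb : IsSMulRegular (S ⧸ Ideal.span {a}) b)
    (hc : IsSMulRegular (S ⧸ Ideal.span {a, b}) c)
    (hd : IsSMulRegular (S ⧸ Ideal.span {a}) d)
    (hm : IsSMulRegular (S ⧸ Ideal.span {a, d}) (b * f - c * e)) {u v w : S}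
    (h : u * (a * e - b * d) + v * (b * f - c * e) + w * (a * f - c * d) ∈ Ideal.span {a}) :
    ∃ p q : S, a ∣ u - (p * f - q * c) ∧ a ∣ v - p * d ∧ a ∣ w - (q * b - p * e) := by
  obtain ⟨g, hg⟩ := Ideal.mem_span_singleton.mp h
  have hv : v ∈ Ideal.span {a, d} := by
    refine mem_of_isSMulRegular_quotient_of_smul_mem hm (Ideal.mem_span_pair.mpr
      ⟨g - u * e - w * f, u * b + w * c, ?_⟩)
    linear_combination -hg
  obtain ⟨v', p, rfl⟩ := Ideal.mem_span_pair.mp hv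
  have hbc : b * (u - p * f) + c * (w + p * e) ∈ Ideal.span {a} := by
    refine mem_of_isSMulRegular_quotient_of_smul_mem hd (Ideal.mem_span_singleton.mpr
      ⟨u * e + v' * (b * f - c * e) + w * f - g, ?_⟩)
    linear_combination -hg
  obtain ⟨k, hk⟩ := Ideal.mem_span_singleton.mp hbc
  have hw : w + p * e ∈ Ideal.span {a, b} := by
    refine mem_of_isSMulRegular_quotient_of_smul_mem hc (Ideal.mem_span_pair.mpr
      ⟨k, -(u - p * f), ?_⟩)
    linear_combination -hk
  obtain ⟨w', q, hq⟩ := Ideal.mem_span_pair.mp hw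
  have hu : u - p * f + q * c ∈ Ideal.span {a} := by
    refine mem_of_isSMulRegular_quotient_of_smul_mem hb (Ideal.mem_span_singleton.mpr
      ⟨k - c * w', ?_⟩)
    linear_combination hk + c * hq
  refine ⟨p, q, ?_, ⟨v', by ring⟩, ⟨w', by linear_combination -hq⟩⟩
  convert Ideal.mem_span_singleton.mp hu using 1
  ring

lemma isSMulRegular_quotient_minorsIdeal
    (ha : IsSMulRegular S a)
    (hb : IsSMulRegular (S ⧸ Ideal.span {a}) b)
    (hc : IsSMulRegular (S ⧸ Ideal.span {a, b}) c)
    (hd : IsSMulRegular (S ⧸ Ideal.span {a}) d)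
    (hm : IsSMulRegular (S ⧸ Ideal.span {a, d}) (b * f - c * e)) :
    IsSMulRegular (S ⧸ minorsIdeal a b c d e f) a := by
  refine (isSMulRegular_quotient_iff_mem_of_smul_mem _ a).mpr fun x hx => ?_
  obtain ⟨u, v, w, huvw⟩ := Submodule.mem_span_triple.mp hx
  simp only [smul_eq_mul] at huvw
  obtain ⟨p, q, ⟨u', hu⟩, ⟨v', hv⟩, ⟨w', hw⟩⟩ :=
    exists_row_syzygies_of_minors_mem_span hb hc hd hm (Ideal.mem_span_singleton.mpr ⟨x, huvw⟩)
  refine Submodule.mem_span_triple.mpr ⟨u', v' + q, w', ha ?_⟩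
  simp only [smul_eq_mul]
  linear_combination huvw - (a * e - b * d) * hu - (b * f - c * e) * hv - (a * f - c * d) * hw

end Regular

section Shear

variable {σ R : Type*} [CommRing R]

lemma isSMulRegular_quotient_span_X_image_X {s : Set σ} {i : σ} (hi : i ∉ s) :
    IsSMulRegular (MvPolynomial σ R ⧸ Ideal.span (X '' s : Set (MvPolynomial σ R)))
      (X i : MvPolynomial σ R) := by
  classical
  refine (isSMulRegular_quotient_iff_mem_of_smul_mem _ _).mpr fun f hf => ?_
  rw [smul_eq_mul, mem_ideal_span_X_image] at hf
  refine mem_ideal_span_X_image.mpr fun m hm => ?_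
  obtain ⟨j, hj, hmj⟩ := hf (Finsupp.single i 1 + m) (by simpa using hm)
  have hij : i ≠ j := (ne_of_mem_of_not_mem hj hi).symm
  exact ⟨j, hj, by simpa [hij] using hmj⟩

open Classical in
/-- The substitution `Xᵢ ↦ Xᵢ + p` fixing all other variables; it is an automorphism when `p` does
not involve `Xᵢ`. -/
def shear (i : σ) (p : MvPolynomial σ R) : MvPolynomial σ R →ₐ[R] MvPolynomial σ R :=
  aeval (Function.update X i (X i + p))

lemma shear_X_self (i : σ) (p : MvPolynomial σ R) : shear i p (X i) = X i + p := by
  simp [shear]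

lemma shear_X_of_ne {i j : σ} (h : j ≠ i) (p : MvPolynomial σ R) : shear i p (X j) = X j := by
  simp [shear, h]

lemma shear_apply_of_mem_supported {i : σ} (p : MvPolynomial σ R) {q : MvPolynomial σ R}
    (hq : q ∈ supported R {i}ᶜ) : shear i p q = q := by
  have h : supported R {i}ᶜ ≤ AlgHom.equalizer (shear i p) (AlgHom.id R _) := by
    refine Algebra.adjoin_le ?_
    rintro _ ⟨j, hj, rfl⟩
    exact shear_X_of_ne hj p
  exact h hq

lemma shear_shear_neg {i : σ} {p : MvPolynomial σ R} (hp : p ∈ supported R {i}ᶜ)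
    (f : MvPolynomial σ R) : shear i p (shear i (-p) f) = f := by
  have h : (shear i p).comp (shear i (-p)) = AlgHom.id R _ := by
    ext1 j
    obtain rfl | hj := eq_or_ne j i
    · simp [shear_X_self, shear_apply_of_mem_supported p hp]
    · simp [shear_X_of_ne hj]
  exact DFunLike.congr_fun h f

lemma shear_mem_span_X_image {s : Set σ} {i : σ} (hi : i ∉ s) (p : MvPolynomial σ R)
    {f : MvPolynomial σ R} (hf : f ∈ Ideal.span (X '' s)) :
    shear i p f ∈ Ideal.span (X '' s) := by
  have h : Ideal.span (X '' s : Set (MvPolynomial σ R)) ≤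
      (Ideal.span (X '' s : Set (MvPolynomial σ R))).comap (shear i p) := by
    refine Ideal.span_le.mpr ?_
    rintro _ ⟨j, hj, rfl⟩
    rw [SetLike.mem_coe, Ideal.mem_comap, shear_X_of_ne (ne_of_mem_of_not_mem hj hi)]
    exact Ideal.subset_span ⟨j, hj, rfl⟩
  exact h hf

lemma isSMulRegular_quotient_span_X_image_X_add {s : Set σ} {i : σ} (hi : i ∉ s)
    {p : MvPolynomial σ R} (hp : p ∈ supported R {i}ᶜ) :
    IsSMulRegular (MvPolynomial σ R ⧸ Ideal.span (X '' s : Set (MvPolynomial σ R))) (X i + p) := by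
  refine (isSMulRegular_quotient_iff_mem_of_smul_mem _ _).mpr fun f hf => ?_
  have h : (X i : MvPolynomial σ R) • shear i (-p) f ∈ Ideal.span (X '' s) := by
    simpa [shear_X_self, shear_apply_of_mem_supported (-p) hp]
      using shear_mem_span_X_image hi (-p) hf
  rw [← shear_shear_neg hp f]
  exact shear_mem_span_X_image hi p
    (mem_of_isSMulRegular_quotient_of_smul_mem (isSMulRegular_quotient_span_X_image_X hi) h)

end Shear

section Extension

variable (R : Type*) [CommRing R]

/-- The map `φ` parametrizing the affine extension, over an arbitrary coefficient ring. -/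
def parametrization : MvPolynomial (Fin 5) R →ₐ[R] MvPolynomial (Fin 3) R :=
  aeval ![X 0, X 1, X 0 * X 2, X 1 * X 2, X 0 * X 2 ^ 2 - X 2]

/-- The ideal of the three relations, which cuts out `Z ⊆ 𝔸⁵`. -/
def relIdeal : Ideal (MvPolynomial (Fin 5) R) :=
  Ideal.span {X 0 * X 3 - X 1 * X 2, X 1 * X 4 + X 3 - X 2 * X 3, X 0 * X 4 - X 2 ^ 2 + X 2}

lemma relIdeal_eq_minorsIdeal :
    relIdeal R = minorsIdeal (X 0) (X 1) (X 2 - 1) (X 2) (X 3) (X 4) := by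
  have h₁₅ : (X 0 * X 4 - X 2 ^ 2 + X 2 : MvPolynomial (Fin 5) R) =
      X 0 * X 4 - (X 2 - 1) * X 2 := by
    ring
  have h₂₅ : (X 1 * X 4 + X 3 - X 2 * X 3 : MvPolynomial (Fin 5) R) =
      X 1 * X 4 - (X 2 - 1) * X 3 := by
    ring
  rw [relIdeal, minorsIdeal, h₂₅, h₁₅]

lemma relIdeal_le_ker_parametrization : relIdeal R ≤ RingHom.ker (parametrization R) := by
  refine Ideal.span_le.mpr ?_
  rintro _ (rfl | rfl | rfl) <;>
    simp only [SetLike.mem_coe, RingHom.mem_ker, parametrization, map_add, map_sub, map_mul,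
      map_pow, aeval_X, Matrix.cons_val] <;>
    ring

lemma isSMulRegular_quotient_relIdeal_X_zero :
    IsSMulRegular (MvPolynomial (Fin 5) R ⧸ relIdeal R) (X 0 : MvPolynomial (Fin 5) R) := by
  rw [relIdeal_eq_minorsIdeal]
  apply isSMulRegular_quotient_minorsIdeal
  · exact isRegular_X.left.isSMulRegular
  · rw [← Set.image_singleton]
    exact isSMulRegular_quotient_span_X_image_X (by decide)
  · rw [← Set.image_pair, sub_eq_add_neg]
    exact isSMulRegular_quotient_span_X_image_X_add (by decide) (neg_mem (one_mem _))
  · rw [← Set.image_singleton]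
    exact isSMulRegular_quotient_span_X_image_X (by decide)
  · rw [← Set.image_pair]
    have hp : (X 1 * X 4 : MvPolynomial (Fin 5) R) ∈ supported R {3}ᶜ :=
      mul_mem (Algebra.subset_adjoin ⟨1, by simp⟩) (Algebra.subset_adjoin ⟨4, by simp⟩)
    refine isSMulRegular_quotient_of_sub_mem
      (isSMulRegular_quotient_span_X_image_X_add (i := 3) (by decide) hp) ?_
    rw [Set.image_pair]
    exact Ideal.mem_span_pair.mpr ⟨0, -X 3, by ring⟩

variable {R}

lemma ker_parametrization_le_ker {L : Type*} [CommRing L] [Algebra R L]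
    (χ : MvPolynomial (Fin 5) R →ₐ[R] L)
    (hunit : IsUnit (χ (X 0))) (hrel : relIdeal R ≤ RingHom.ker χ) :
    RingHom.ker (parametrization R) ≤ RingHom.ker χ := by
  obtain ⟨z, hz⟩ := hunit.exists_right_inv
  have h₁₄ : χ (X 0) * χ (X 3) - χ (X 1) * χ (X 2) = 0 := by
    simpa using hrel (Ideal.subset_span (.inl rfl))
  have h₁₅ : χ (X 0) * χ (X 4) - χ (X 2) ^ 2 + χ (X 2) = 0 := by
    simpa using hrel (Ideal.subset_span (.inr (.inr rfl)))
  have hfactor : (aeval ![χ (X 0), χ (X 1), χ (X 2) * z]).comp (parametrization R) = χ := by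
    ext i
    fin_cases i
    · simp [parametrization]
    · simp [parametrization]
    · suffices χ (X 0) * (χ (X 2) * z) = χ (X 2) by simpa [parametrization]
      linear_combination χ (X 2) * hz
    · suffices χ (X 1) * (χ (X 2) * z) = χ (X 3) by simpa [parametrization]
      linear_combination χ (X 3) * hz - z * h₁₄
    · suffices χ (X 0) * (χ (X 2) * z) ^ 2 - χ (X 2) * z = χ (X 4) by simpa [parametrization]
      linear_combination (χ (X 4) + χ (X 2) ^ 2 * z) * hz - z * h₁₅
  intro f hf
  rw [RingHom.mem_ker] at hf ⊢
  rw [← hfactor, AlgHom.comp_apply, hf, map_zero]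

variable (R) in
theorem stmt19_general :
    RingHom.ker (aeval ![(X 0 : MvPolynomial (Fin 3) R), X 1, X 0 * X 2, X 1 * X 2,
        X 0 * (X 2) ^ 2 - X 2] : MvPolynomial (Fin 5) R →ₐ[R] MvPolynomial (Fin 3) R) =
      Ideal.span {X 0 * X 3 - X 1 * X 2, X 1 * X 4 + X 3 - X 2 * X 3,
        X 0 * X 4 - (X 2) ^ 2 + X 2} := by
  change RingHom.ker (parametrization R) = relIdeal R
  refine le_antisymm ?_ (relIdeal_le_ker_parametrization R)
  let L := Localization.Away (Ideal.Quotient.mk (relIdeal R) (X 0))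
  let χ := IsScalarTower.toAlgHom R (MvPolynomial (Fin 5) R) L
  have hker : RingHom.ker χ = relIdeal R :=
    ker_algebraMap_localizationAway_quotient (isSMulRegular_quotient_relIdeal_X_zero R)
  have hunit : IsUnit (χ (X 0)) :=
    IsLocalization.Away.algebraMap_isUnit (Ideal.Quotient.mk (relIdeal R) (X 0))
  exact (ker_parametrization_le_ker χ hunit hker.ge).trans hker.le

end Extension

/-- The kernel of the ℂ-algebra homomorphism
`φ : ℂ[T₁, T₂, T₃, T₄, T₅] → ℂ[x, y, t]` determined by `T₁ ↦ x`, `T₂ ↦ y`, `T₃ ↦ xt`,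
`T₄ ↦ yt`, `T₅ ↦ xt² − t` is exactly the ideal generated by the three polynomials
`T₁T₄ − T₂T₃`, `T₂T₅ + T₄ − T₃T₄`, and `T₁T₅ − T₃² + T₃`.
(Here `x = X 0`, `y = X 1`, `t = X 2` in `ℂ[x, y, t]`, and `Tᵢ = X (i-1)` in
`ℂ[T₁, …, T₅]`.) -/
theorem stmt19 :
    RingHom.ker (aeval ![(X 0 : MvPolynomial (Fin 3) ℂ), X 1, X 0 * X 2, X 1 * X 2,
        X 0 * (X 2) ^ 2 - X 2] : MvPolynomial (Fin 5) ℂ →ₐ[ℂ] MvPolynomial (Fin 3) ℂ) =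
      Ideal.span {X 0 * X 3 - X 1 * X 2, X 1 * X 4 + X 3 - X 2 * X 3,
        X 0 * X 4 - (X 2) ^ 2 + X 2} :=
  stmt19_general ℂ

end
end
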